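/- arXiv:1802.02328 — 2 statements merged into one kernel-verified Lean document; each statement's English description precedes it below -/
import Mathlib

section
/- Weak-constraint a posteriori error bound (Proposition 2). Suppose (y^k)_{k=0..K} ⊂ Y, (p^k)_{k=1..K+1} ⊂ Y and controls u^1,…,u^K ∈ U satisfy the full-order weak-constraint optimality system: y^0 = y_0; m(y^k − y^{k−1}, φ) + τ a(y^k, φ) = τ b(u^k, φ) + τ f(φ) for all φ ∈ Y and k = 1,…,K; p^{K+1} = 0; m(φ, p^k − p^{k+1}) + τ a(φ, p^k) = τ (z_d^k − C y^k, C φ)_D for all φ ∈ Y and k = 1,…,K; and (u^k − u_d^k, ψ)_U − b(ψ, p^k) = 0 for all ψ ∈ U and k = 1,…,K. Let (y_N^k)_{k=0..K} ⊂ Y, (p_N^k)_{k=1..K+1} ⊂ Y and u_N^1,…,u_N^K ∈ U be any candidate with y_N^0 = y_0 and p_N^{K+1} = 0, and define the residuals r̃_y^k(φ) = f(φ) + b(u_N^k, φ) − a(y_N^k, φ) − (1/τ) m(y_N^k − y_N^{k−1}, φ), r̃_p^k(φ) = (z_d^k − C y_N^k, C φ)_D − a(φ, p_N^k) − (1/τ)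 m(φ, p_N^k − p_N^{k+1}) for φ ∈ Y, r̃_u^k(ψ) = b(ψ, p_N^k) − (u_N^k − u_d^k, ψ)_U for ψ ∈ U, and set R̃_y = (τ Σ_{k=1}^K ‖r̃_y^k‖_{Y'}²)^{1/2}, R̃_p = (τ Σ_{k=1}^K ‖r̃_p^k‖_{Y'}²)^{1/2}, R̃_u = (τ Σ_{k=1}^K ‖r̃_u^k‖_{U'}²)^{1/2}. Then (τ Σ_{k=1}^K ‖u^k − u_N^k‖_U²)^{1/2} ≤ c₁ + √(c₁² + c₂), where c₁ = (1/2)(R̃_u + (√2 γ_b / α_LB) R̃_p) and c₂ = (2√2/α_LB) R̃_y R̃_p + (γ_c²/(2 α_LB²)) R̃_y². -/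
set_option autoImplicit false

open Finset RealInnerProductSpace

/-- Dual norm of a functional `r` over the nonzero elements of `S`,
with respect to the norm function `nrm`. -/
noncomputable def dualNorm {Y : Type*} [Zero Y] (nrm : Y → ℝ) (S : Set Y) (r : Y → ℝ) : ℝ :=
  sSup {x : ℝ | ∃ v ∈ S, v ≠ 0 ∧ x = r v / nrm v}

lemma aux_dual {H Y : Type*} [NormedAddCommGroup H] [InnerProductSpace ℝ H]
    [NormedAddCommGroup Y] [InnerProductSpace ℝ Y] [FiniteDimensional ℝ Y]
    (ι : Y →ₗ[ℝ] H) (hι : Function.Injective ι) (S : Set Y) (r : Y →ₗ[ℝ] ℝ)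
    (v : Y) (hv : v ∈ S) :
    r v ≤ dualNorm (fun v : Y => ‖ι v‖) S ⇑r * ‖ι v‖ := by
  by_cases h0 : v = 0
  · simp [h0]
  have hpos : ∀ w : Y, w ≠ 0 → 0 < ‖ι w‖ := fun w hw =>
    norm_pos_iff.2 fun h => hw (hι (by simpa using h))
  obtain ⟨c, hc, hanti⟩ := ι.exists_antilipschitzWith (LinearMap.ker_eq_bot.2 hι)
  rw [← div_le_iff₀ (hpos v h0)]
  refine le_csSup ⟨‖LinearMap.toContinuousLinearMap r‖ * c, ?_⟩ ⟨v, hv, h0, rfl⟩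
  rintro x ⟨w, -, hw, rfl⟩
  show r w / ‖ι w‖ ≤ _
  rw [div_le_iff₀ (hpos w hw)]
  have h1 := (LinearMap.toContinuousLinearMap r).le_opNorm w
  have h2 : ‖w‖ ≤ c * ‖ι w‖ := by
    simpa [dist_zero_right] using hanti.le_mul_dist w 0
  calc r w ≤ ‖r w‖ := le_abs_self _
    _ ≤ ‖LinearMap.toContinuousLinearMap r‖ * ‖w‖ := h1
    _ ≤ ‖LinearMap.toContinuousLinearMap r‖ * (c * ‖ι w‖) := by gcongr
    _ = _ := by ring

lemma aux_cs (τ : ℝ) (hτ : 0 < τ) (K : ℕ) (g h : ℕ → ℝ) :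
    τ * ∑ k ∈ Icc 1 K, g k * h k ≤
      Real.sqrt (τ * ∑ k ∈ Icc 1 K, g k ^ 2) * Real.sqrt (τ * ∑ k ∈ Icc 1 K, h k ^ 2) := by
  rw [Real.sqrt_mul hτ.le, Real.sqrt_mul hτ.le]
  have := Real.sum_mul_le_sqrt_mul_sqrt (Icc 1 K) g h
  have h2 := Real.mul_self_sqrt hτ.le
  calc _ ≤ τ * _ := mul_le_mul_of_nonneg_left this hτ.le
    _ = (Real.sqrt τ * Real.sqrt τ) * _ := by rw [h2]
    _ = _ := by ring

lemma aux_sq (τ : ℝ) (hτ : 0 < τ) (K : ℕ) (g : ℕ → ℝ) :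
    Real.sqrt (τ * ∑ k ∈ Icc 1 K, g k ^ 2) ^ 2 = τ * ∑ k ∈ Icc 1 K, g k ^ 2 :=
  Real.sq_sqrt (mul_nonneg hτ.le (Finset.sum_nonneg fun _ _ => sq_nonneg _))

lemma aux_tel {H : Type*} [NormedAddCommGroup H] [InnerProductSpace ℝ H] (e q : ℕ → H) (K : ℕ) :
    ∑ k ∈ Icc 1 K, ⟪e k - e (k - 1), q k⟫ - ∑ k ∈ Icc 1 K, ⟪e k, q k - q (k + 1)⟫
      = ⟪e K, q (K + 1)⟫ - ⟪e 0, q 1⟫ := by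
  induction K with
  | zero => simp
  | succ n ih =>
    rw [Finset.sum_Icc_succ_top (by omega), Finset.sum_Icc_succ_top (by omega)]
    simp only [Nat.add_sub_cancel, inner_sub_left, inner_sub_right] at ih ⊢
    linarith

lemma aux_en1 {H : Type*} [NormedAddCommGroup H] [InnerProductSpace ℝ H] (e : ℕ → H) (K : ℕ) :
    (‖e K‖ ^ 2 - ‖e 0‖ ^ 2) / 2 ≤ ∑ k ∈ Icc 1 K, ⟪e k - e (k - 1), e k⟫ := by
  induction K with
  | zero => simp
  | succ n ih =>
    rw [Finset.sum_Icc_succ_top (by omega)]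
    have h := norm_sub_sq_real (e (n + 1)) (e n)
    have h' := sq_nonneg ‖e (n + 1) - e n‖
    have h2 := real_inner_self_eq_norm_sq (e (n + 1))
    have h3 := real_inner_comm (e (n + 1)) (e n)
    simp only [Nat.add_sub_cancel, inner_sub_left] at ih ⊢
    linarith

lemma aux_en2 {H : Type*} [NormedAddCommGroup H] [InnerProductSpace ℝ H] (e : ℕ → H) (K : ℕ) :
    (‖e 1‖ ^ 2 - ‖e (K + 1)‖ ^ 2) / 2 ≤ ∑ k ∈ Icc 1 K, ⟪e k, e k - e (k + 1)⟫ := by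
  induction K with
  | zero => simp
  | succ n ih =>
    rw [Finset.sum_Icc_succ_top (by omega)]
    have h := norm_sub_sq_real (e (n + 1)) (e (n + 1 + 1))
    have h' := sq_nonneg ‖e (n + 1) - e (n + 1 + 1)‖
    have h2 := real_inner_self_eq_norm_sq (e (n + 1))
    simp only [inner_sub_right] at ih ⊢
    linarith

lemma aux_div {α X B : ℝ} (hX : 0 ≤ X) (hB : 0 ≤ B) (h : α * X ^ 2 ≤ B * X) : α * X ≤ B := by
  rcases hX.eq_or_lt with h0 | h0
  · rw [← h0]; simpa using hB
  · exact le_of_mul_le_mul_right (by linarith [sq X, mul_assoc α X X, congrArg (α * ·) (sq X)]) h0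

lemma aux_final {α γb γc x z X P Ry Rp Ru : ℝ} (hα : 0 < α) (hγb : 0 ≤ γb)
    (hx : 0 ≤ x) (hRy : 0 ≤ Ry) (hRp : 0 ≤ Rp)
    (hX : α * X ≤ γb * x + Ry) (hP : α * P ≤ γc * z + Rp)
    (h : x ^ 2 + z ^ 2 ≤ Ru * x + Rp * X + Ry * P) :
    x ^ 2 ≤ 2 * ((1 / 2) * (Ru + Real.sqrt 2 * γb / α * Rp)) * x
      + ((2 * Real.sqrt 2 / α) * Ry * Rp + γc ^ 2 / (2 * α ^ 2) * Ry ^ 2) := by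
  have hs : 1 ≤ Real.sqrt 2 := Real.one_le_sqrt.2 (by norm_num)
  have hX' : X ≤ (γb * x + Ry) / α := by rw [le_div_iff₀ hα]; linarith
  have hP' : P ≤ (γc * z + Rp) / α := by rw [le_div_iff₀ hα]; linarith
  have h1 := mul_le_mul_of_nonneg_left hX' hRp
  have h2 := mul_le_mul_of_nonneg_left hP' hRy
  have h3 := sq_nonneg (z - γc * Ry / (2 * α))
  have e1 : Rp * ((γb * x + Ry) / α) = γb / α * Rp * x + Ry * Rp / α := by ring
  have e2 : Ry * ((γc * z + Rp) / α) = 2 * (z * (γc * Ry / (2 * α))) + Ry * Rp / α := by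
    field_simp
  have e3 : γc ^ 2 / (2 * α ^ 2) * Ry ^ 2 = 2 * (γc * Ry / (2 * α)) ^ 2 := by
    field_simp
  have h4 : 0 ≤ (Real.sqrt 2 - 1) * (γb / α * Rp * x) :=
    mul_nonneg (by linarith) (by positivity)
  have h5 : 0 ≤ (Real.sqrt 2 - 1) * (Ry * Rp / α) :=
    mul_nonneg (by linarith) (by positivity)
  have e4 : 2 * ((1 / 2) * (Ru + Real.sqrt 2 * γb / α * Rp)) * x
     = Ru * x + Real.sqrt 2 * (γb / α * Rp * x) := by ring
  have e5 : (2 * Real.sqrt 2 / α) * Ry * Rp = 2 * (Real.sqrt 2 * (Ry * Rp / α)) := by ring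
  rw [e3, e4, e5]
  rw [e1] at h1
  rw [e2] at h2
  nlinarith [sq_nonneg (γc * Ry / (2 * α))]

set_option maxHeartbeats 2000000 in
/-- Weak-constraint a posteriori error bound (Proposition 2). -/
theorem weak_constraint_a_posteriori_error_bound
    {H Y D : Type*} [NormedAddCommGroup H] [InnerProductSpace ℝ H]
    [NormedAddCommGroup Y] [InnerProductSpace ℝ Y] [FiniteDimensional ℝ Y]
    [NormedAddCommGroup D] [InnerProductSpace ℝ D]
    (ι : Y →ₗ[ℝ] H) (hι : Function.Injective ι)
    (U : Submodule ℝ Y)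
    (a : Y →ₗ[ℝ] (Y →ₗ[ℝ] ℝ))
    (τ : ℝ) (hτ : 0 < τ) (K : ℕ) (hK : 1 ≤ K)
    (αLB : ℝ) (hαLB : 0 < αLB) (hcoer : ∀ v : Y, αLB * ‖v‖ ^ 2 ≤ a v v)
    (C : Y →ₗ[ℝ] D) (γc : ℝ) (hγc : ∀ v : Y, ‖C v‖ ≤ γc * ‖v‖)
    (b : Y →ₗ[ℝ] (Y →ₗ[ℝ] ℝ)) (γb : ℝ)
    (hγb : ∀ w ∈ U, ∀ v : Y, |b w v| ≤ γb * ‖ι w‖ * ‖v‖)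
    (f : Y →ₗ[ℝ] ℝ) (zd : ℕ → D) (y0 : Y) (ud : ℕ → Y)
    (hud : ∀ k, 1 ≤ k → k ≤ K → ud k ∈ U)
    (y p yN pN : ℕ → Y) (u uN : ℕ → Y)
    (hu : ∀ k, 1 ≤ k → k ≤ K → u k ∈ U) (huN : ∀ k, 1 ≤ k → k ≤ K → uN k ∈ U)
    (hy0 : y 0 = y0)
    (hstate : ∀ k, 1 ≤ k → k ≤ K → ∀ φ : Y,
      ⟪ι (y k - y (k - 1)), ι φ⟫ + τ * a (y k) φ = τ * b (u k) φ + τ * f φ)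
    (hpfin : p (K + 1) = 0)
    (hadj : ∀ k, 1 ≤ k → k ≤ K → ∀ φ : Y,
      ⟪ι φ, ι (p k - p (k + 1))⟫ + τ * a φ (p k) = τ * ⟪zd k - C (y k), C φ⟫)
    (hopt : ∀ k, 1 ≤ k → k ≤ K → ∀ ψ ∈ U,
      ⟪ι (u k - ud k), ι ψ⟫ - b ψ (p k) = 0)
    (hyN0 : yN 0 = y0) (hpNfin : pN (K + 1) = 0)
    (ry rp ru : ℕ → (Y →ₗ[ℝ] ℝ))
    (hry : ∀ k, 1 ≤ k → k ≤ K → ∀ φ : Y,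
      ry k φ = f φ + b (uN k) φ - a (yN k) φ
        - (1 / τ) * ⟪ι (yN k - yN (k - 1)), ι φ⟫)
    (hrp : ∀ k, 1 ≤ k → k ≤ K → ∀ φ : Y,
      rp k φ = ⟪zd k - C (yN k), C φ⟫ - a φ (pN k)
        - (1 / τ) * ⟪ι φ, ι (pN k - pN (k + 1))⟫)
    (hru : ∀ k, 1 ≤ k → k ≤ K → ∀ ψ ∈ U,
      ru k ψ = b ψ (pN k) - ⟪ι (uN k - ud k), ι ψ⟫)
    (Ry Rp Ru c1 c2 : ℝ)
    (hRy : Ry = Real.sqrt (τ * ∑ k ∈ Icc 1 K, (dualNorm (fun v : Y => ‖v‖) Set.univ ⇑(ry k)) ^ 2))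
    (hRp : Rp = Real.sqrt (τ * ∑ k ∈ Icc 1 K, (dualNorm (fun v : Y => ‖v‖) Set.univ ⇑(rp k)) ^ 2))
    (hRu : Ru = Real.sqrt (τ * ∑ k ∈ Icc 1 K, (dualNorm (fun v : Y => ‖ι v‖) (U : Set Y) ⇑(ru k)) ^ 2))
    (hc1 : c1 = (1 / 2) * (Ru + Real.sqrt 2 * γb / αLB * Rp))
    (hc2 : c2 = (2 * Real.sqrt 2 / αLB) * Ry * Rp + γc ^ 2 / (2 * αLB ^ 2) * Ry ^ 2) :
    Real.sqrt (τ * ∑ k ∈ Icc 1 K, ‖ι (u k - uN k)‖ ^ 2)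
      ≤ c1 + Real.sqrt (c1 ^ 2 + c2) := by
  have hRy0 : 0 ≤ Ry := hRy ▸ Real.sqrt_nonneg _
  have hRp0 : 0 ≤ Rp := hRp ▸ Real.sqrt_nonneg _
  have hc20 : 0 ≤ c2 := by rw [hc2]; positivity
  have hrhs : 0 ≤ c1 + Real.sqrt (c1 ^ 2 + c2) := by
    have : |c1| ≤ Real.sqrt (c1 ^ 2 + c2) := Real.abs_le_sqrt (by linarith)
    linarith [neg_abs_le c1]
  set x := Real.sqrt (τ * ∑ k ∈ Icc 1 K, ‖ι (u k - uN k)‖ ^ 2) with hxdef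
  have hx0 : 0 ≤ x := Real.sqrt_nonneg _
  rcases hx0.eq_or_lt with hx | hxpos
  · rw [← hx]; exact hrhs
  set eu : ℕ → Y := fun k => u k - uN k with heu
  set ey : ℕ → Y := fun k => y k - yN k with hey
  set ep : ℕ → Y := fun k => p k - pN k with hep
  have hxsq : x ^ 2 = τ * ∑ k ∈ Icc 1 K, ‖ι (eu k)‖ ^ 2 := aux_sq τ hτ K _
  have heuU : ∀ k, 1 ≤ k → k ≤ K → eu k ∈ U := fun k h1 h2 =>
    U.sub_mem (hu k h1 h2) (huN k h1 h2)
  -- error equations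
  have Estate : ∀ k, 1 ≤ k → k ≤ K → ∀ φ : Y,
      ⟪ι (ey k) - ι (ey (k - 1)), ι φ⟫ + τ * a (ey k) φ = τ * b (eu k) φ + τ * ry k φ := by
    intro k h1 h2 φ
    have A := hstate k h1 h2 φ
    rw [hry k h1 h2 φ]
    have : τ * (f φ + b (uN k) φ - a (yN k) φ - (1 / τ) * ⟪ι (yN k - yN (k - 1)), ι φ⟫)
      = τ * f φ + τ * b (uN k) φ - τ * a (yN k) φ - ⟪ι (yN k - yN (k - 1)), ι φ⟫ := by
      field_simp
    rw [this]
    simp only [hey, heu, map_sub, LinearMap.sub_apply, inner_sub_left] at A ⊢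
    linarith
  have Eadj : ∀ k, 1 ≤ k → k ≤ K → ∀ φ : Y,
      ⟪ι φ, ι (ep k) - ι (ep (k + 1))⟫ + τ * a φ (ep k)
        = -(τ * ⟪C (ey k), C φ⟫) + τ * rp k φ := by
    intro k h1 h2 φ
    have A := hadj k h1 h2 φ
    rw [hrp k h1 h2 φ]
    have : τ * (⟪zd k - C (yN k), C φ⟫ - a φ (pN k) - (1 / τ) * ⟪ι φ, ι (pN k - pN (k + 1))⟫)
      = τ * ⟪zd k - C (yN k), C φ⟫ - τ * a φ (pN k) - ⟪ι φ, ι (pN k - pN (k + 1))⟫ := by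
      field_simp
    rw [this]
    simp only [hey, hep, map_sub, inner_sub_left, inner_sub_right] at A ⊢
    linarith
  have Eopt : ∀ k, 1 ≤ k → k ≤ K → ∀ ψ ∈ U,
      ⟪ι (eu k), ι ψ⟫ - b ψ (ep k) = ru k ψ := by
    intro k h1 h2 ψ hψ
    have A := hopt k h1 h2 ψ hψ
    rw [hru k h1 h2 ψ hψ]
    simp only [heu, hep, map_sub, inner_sub_left] at A ⊢
    linarith
  have hey0 : ey 0 = 0 := by simp [hey, hy0, hyN0]
  have hepK : ep (K + 1) = 0 := by simp [hep, hpfin, hpNfin]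
  -- signs of constants
  have hYnz : ∃ v : Y, v ≠ 0 := by
    by_contra hcon
    push Not at hcon
    have : x = 0 := by
      rw [hxdef, Finset.sum_eq_zero]
      · simp
      · intro j hj
        rw [hcon (u j - uN j)]; simp
    linarith
  obtain ⟨v, hv⟩ := hYnz
  have hvpos : 0 < ‖v‖ := norm_pos_iff.2 hv
  have hγc0 : 0 ≤ γc := nonneg_of_mul_nonneg_left ((norm_nonneg _).trans (hγc v)) hvpos
  have hγb0 : 0 ≤ γb := by
    by_contra hneg
    push Not at hneg
    have : x = 0 := by
      rw [hxdef, Finset.sum_eq_zero]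
      · simp
      · intro j hj
        rw [Finset.mem_Icc] at hj
        have h1 := (abs_nonneg _).trans (hγb _ (heuU j hj.1 hj.2) v)
        have h3 := nonneg_of_mul_nonneg_left h1 hvpos
        have h4 : ‖ι (eu j)‖ = 0 := by nlinarith [norm_nonneg (ι (eu j))]
        have h5 : ‖ι (u j - uN j)‖ = 0 := h4
        rw [h5]; norm_num
    linarith
  -- dual norm bounds
  have Dy : ∀ k (w : Y), ry k w ≤ dualNorm (fun v : Y => ‖v‖) Set.univ ⇑(ry k) * ‖w‖ :=
    fun k w => aux_dual (LinearMap.id : Y →ₗ[ℝ] Y) Function.injective_id Set.univ (ry k) w trivial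
  have Dp : ∀ k (w : Y), rp k w ≤ dualNorm (fun v : Y => ‖v‖) Set.univ ⇑(rp k) * ‖w‖ :=
    fun k w => aux_dual (LinearMap.id : Y →ₗ[ℝ] Y) Function.injective_id Set.univ (rp k) w trivial
  have Du : ∀ k, ∀ w ∈ U,
      ru k w ≤ dualNorm (fun v : Y => ‖ι v‖) (U : Set Y) ⇑(ru k) * ‖ι w‖ :=
    fun k w hw => aux_dual ι hι U (ru k) w hw
  set X := Real.sqrt (τ * ∑ k ∈ Icc 1 K, ‖ey k‖ ^ 2) with hX
  set P := Real.sqrt (τ * ∑ k ∈ Icc 1 K, ‖ep k‖ ^ 2) with hP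
  set z := Real.sqrt (τ * ∑ k ∈ Icc 1 K, ‖C (ey k)‖ ^ 2) with hz
  have hXsq : X ^ 2 = τ * ∑ k ∈ Icc 1 K, ‖ey k‖ ^ 2 := aux_sq τ hτ K _
  have hPsq : P ^ 2 = τ * ∑ k ∈ Icc 1 K, ‖ep k‖ ^ 2 := aux_sq τ hτ K _
  have hzsq : z ^ 2 = τ * ∑ k ∈ Icc 1 K, ‖C (ey k)‖ ^ 2 := aux_sq τ hτ K _
  have hX0 : 0 ≤ X := Real.sqrt_nonneg _
  have hP0 : 0 ≤ P := Real.sqrt_nonneg _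
  have hz0 : 0 ≤ z := Real.sqrt_nonneg _
  have sumle : ∀ (F G h : ℕ → ℝ), (∀ k, 1 ≤ k → k ≤ K → F k ≤ G k * h k) →
      τ * ∑ k ∈ Icc 1 K, F k ≤ Real.sqrt (τ * ∑ k ∈ Icc 1 K, G k ^ 2) *
        Real.sqrt (τ * ∑ k ∈ Icc 1 K, h k ^ 2) := by
    intro F G h hF
    refine le_trans (mul_le_mul_of_nonneg_left (Finset.sum_le_sum fun k hk => ?_) hτ.le)
      (aux_cs τ hτ K G h)
    rw [Finset.mem_Icc] at hk
    exact hF k hk.1 hk.2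
  have Sru : τ * ∑ k ∈ Icc 1 K, ru k (eu k) ≤ Ru * x := by
    rw [hRu]; exact sumle _ _ _ fun k h1 h2 => Du k _ (heuU k h1 h2)
  have Srpy : τ * ∑ k ∈ Icc 1 K, rp k (ey k) ≤ Rp * X := by
    rw [hRp]; exact sumle _ _ _ fun k h1 h2 => Dp k _
  have Srpp : τ * ∑ k ∈ Icc 1 K, rp k (ep k) ≤ Rp * P := by
    rw [hRp]; exact sumle _ _ _ fun k h1 h2 => Dp k _
  have Sryy : τ * ∑ k ∈ Icc 1 K, ry k (ey k) ≤ Ry * X := by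
    rw [hRy]; exact sumle _ _ _ fun k h1 h2 => Dy k _
  have Sryp : τ * ∑ k ∈ Icc 1 K, -(ry k (ep k)) ≤ Ry * P := by
    rw [hRy]
    refine sumle _ _ _ fun k h1 h2 => ?_
    have := Dy k (-(ep k))
    rwa [map_neg, norm_neg] at this
  have Sb : τ * ∑ k ∈ Icc 1 K, b (eu k) (ey k) ≤ γb * (x * X) := by
    have h1 := aux_cs τ hτ K (fun k => ‖ι (eu k)‖) (fun k => ‖ey k‖)
    have h2 : ∑ k ∈ Icc 1 K, b (eu k) (ey k) ≤ γb * ∑ k ∈ Icc 1 K, ‖ι (eu k)‖ * ‖ey k‖ := by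
      rw [Finset.mul_sum]
      refine Finset.sum_le_sum fun k hk => ?_
      rw [Finset.mem_Icc] at hk
      have := hγb _ (heuU k hk.1 hk.2) (ey k)
      linarith [le_abs_self (b (eu k) (ey k))]
    have h3 := mul_le_mul_of_nonneg_left h2 hτ.le
    have h4 := mul_le_mul_of_nonneg_left h1 hγb0
    calc _ ≤ _ := h3
      _ = γb * (τ * ∑ k ∈ Icc 1 K, ‖ι (eu k)‖ * ‖ey k‖) := by ring
      _ ≤ _ := h4
  have SC : τ * ∑ k ∈ Icc 1 K, -⟪C (ey k), C (ep k)⟫ ≤ γc * (z * P) := by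
    have h1 := aux_cs τ hτ K (fun k => ‖C (ey k)‖) (fun k => ‖ep k‖)
    have h2 : ∑ k ∈ Icc 1 K, -⟪C (ey k), C (ep k)⟫
        ≤ γc * ∑ k ∈ Icc 1 K, ‖C (ey k)‖ * ‖ep k‖ := by
      rw [Finset.mul_sum]
      refine Finset.sum_le_sum fun k hk => ?_
      have e1 := abs_real_inner_le_norm (C (ey k)) (C (ep k))
      have e2 := mul_le_mul_of_nonneg_left (hγc (ep k)) (norm_nonneg (C (ey k)))
      linarith [neg_abs_le ⟪C (ey k), C (ep k)⟫]
    have h3 := mul_le_mul_of_nonneg_left h2 hτ.le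
    have h4 := mul_le_mul_of_nonneg_left h1 hγc0
    calc _ ≤ _ := h3
      _ = γc * (τ * ∑ k ∈ Icc 1 K, ‖C (ey k)‖ * ‖ep k‖) := by ring
      _ ≤ _ := h4
  -- summed equations
  have Q1 : ∀ w : ℕ → Y, ∑ k ∈ Icc 1 K, ⟪ι (ey k) - ι (ey (k - 1)), ι (w k)⟫
      + τ * ∑ k ∈ Icc 1 K, a (ey k) (w k)
      = τ * ∑ k ∈ Icc 1 K, b (eu k) (w k) + τ * ∑ k ∈ Icc 1 K, ry k (w k) := by
    intro w
    simp only [Finset.mul_sum, ← Finset.sum_add_distrib]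
    refine Finset.sum_congr rfl fun k hk => ?_
    rw [Finset.mem_Icc] at hk
    exact Estate k hk.1 hk.2 _
  have Q2 : ∀ w : ℕ → Y, ∑ k ∈ Icc 1 K, ⟪ι (w k), ι (ep k) - ι (ep (k + 1))⟫
      + τ * ∑ k ∈ Icc 1 K, a (w k) (ep k)
      = τ * ∑ k ∈ Icc 1 K, -⟪C (ey k), C (w k)⟫ + τ * ∑ k ∈ Icc 1 K, rp k (w k) := by
    intro w
    simp only [Finset.mul_sum, ← Finset.sum_add_distrib]
    refine Finset.sum_congr rfl fun k hk => ?_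
    rw [Finset.mem_Icc] at hk
    rw [Eadj k hk.1 hk.2 _]; ring
  have Q3 : x ^ 2 = τ * ∑ k ∈ Icc 1 K, b (eu k) (ep k) + τ * ∑ k ∈ Icc 1 K, ru k (eu k) := by
    rw [hxsq]
    simp only [Finset.mul_sum, ← Finset.sum_add_distrib]
    refine Finset.sum_congr rfl fun k hk => ?_
    rw [Finset.mem_Icc] at hk
    rw [← Eopt k hk.1 hk.2 _ (heuU k hk.1 hk.2), real_inner_self_eq_norm_sq]; ring
  have coer : ∀ w : ℕ → Y, αLB * (τ * ∑ k ∈ Icc 1 K, ‖w k‖ ^ 2)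
      ≤ τ * ∑ k ∈ Icc 1 K, a (w k) (w k) := by
    intro w
    have : αLB * ∑ k ∈ Icc 1 K, ‖w k‖ ^ 2 ≤ ∑ k ∈ Icc 1 K, a (w k) (w k) := by
      rw [Finset.mul_sum]; exact Finset.sum_le_sum fun k _ => hcoer _
    calc _ = τ * (αLB * ∑ k ∈ Icc 1 K, ‖w k‖ ^ 2) := by ring
      _ ≤ _ := mul_le_mul_of_nonneg_left this hτ.le
  have BX : αLB * X ≤ γb * x + Ry := by
    apply aux_div hX0 (by positivity)
    have h1 := coer ey
    have h2 := Q1 ey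
    have h3 := aux_en1 (fun k => ι (ey k)) K
    simp only [hey0, map_zero, norm_zero] at h3
    rw [hXsq]
    have e : (γb * x + Ry) * X = γb * (x * X) + Ry * X := by ring
    rw [e]
    linarith [sq_nonneg ‖ι (ey K)‖]
  have BP : αLB * P ≤ γc * z + Rp := by
    apply aux_div hP0 (by positivity)
    have h1 := coer ep
    have h2 := Q2 ep
    have h3 := aux_en2 (fun k => ι (ep k)) K
    simp only [hepK, map_zero, norm_zero] at h3
    rw [hPsq]
    have e : (γc * z + Rp) * P = γc * (z * P) + Rp * P := by ring
    rw [e]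
    linarith [sq_nonneg ‖ι (ep 1)‖]
  have main : x ^ 2 + z ^ 2 ≤ Ru * x + Rp * X + Ry * P := by
    have h1 := Q1 ep
    have h2 := Q2 ey
    have h3 := aux_tel (fun k => ι (ey k)) (fun k => ι (ep k)) K
    simp only [hepK, hey0, map_zero, inner_zero_left, inner_zero_right] at h3
    have h4 : τ * ∑ k ∈ Icc 1 K, -⟪C (ey k), C (ey k)⟫ = - z ^ 2 := by
      rw [hzsq, Finset.sum_neg_distrib]
      simp only [real_inner_self_eq_norm_sq]; ring
    rw [Finset.sum_neg_distrib] at Sryp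
    linarith
  have fin := aux_final hαLB hγb0 hx0 hRy0 hRp0 BX BP main
  rw [← hc1, ← hc2] at fin
  have : x - c1 ≤ Real.sqrt (c1 ^ 2 + c2) := by
    refine (le_abs_self _).trans (Real.abs_le_sqrt ?_)
    have e : (x - c1) ^ 2 = x ^ 2 - 2 * c1 * x + c1 ^ 2 := by ring
    rw [e]
    linarith
  linarith
end

section
/- Spatio-temporal energy estimate for the adjoint error (inequality (eq11)). Suppose e_p^1,…,e_p^{K+1} ∈ Y with e_p^{K+1} = 0 and e_y^1,…,e_y^K ∈ Y, together with linear functionals r_p^1,…,r_p^K on Y, satisfy m(φ, e_p^k − e_p^{k+1}) + τ a(φ, e_p^k) = τ r_p^k(φ) − τ (C e_y^k, C φ)_D for all φ ∈ Y and k = 1,…,K. Then τ Σ_{k=1}^K ‖e_p^k‖_Y² ≤ (2τ/α_LB²) Σ_{k=1}^K ‖r_p^k‖_{Y'}² + 2 (γ_c/α_LB)² · τ Σ_{k=1}^K ‖C e_y^k‖_D². -/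
set_option autoImplicit false

open Finset RealInnerProductSpace

theorem le_dualNorm_mul {Y : Type*} [NormedAddCommGroup Y] [InnerProductSpace ℝ Y]
    [FiniteDimensional ℝ Y] (r : Y →ₗ[ℝ] ℝ) (v : Y) :
    r v ≤ dualNorm (fun v : Y => ‖v‖) Set.univ ⇑r * ‖v‖ := by
  by_cases hv : v = 0
  · simp [hv]
  have hpos : 0 < ‖v‖ := norm_pos_iff.mpr hv
  rw [← div_le_iff₀ hpos]
  refine le_csSup ⟨‖LinearMap.toContinuousLinearMap r‖, ?_⟩ ⟨v, Set.mem_univ _, hv, rfl⟩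
  rintro x ⟨w, -, hw, rfl⟩
  have hwpos : 0 < ‖w‖ := norm_pos_iff.mpr hw
  rw [div_le_iff₀ hwpos]
  exact (le_abs_self _).trans ((LinearMap.toContinuousLinearMap r).le_opNorm w)

theorem adjoint_step_real {τ α γ x R c A N M I : ℝ} (hτ : 0 < τ) (hα : 0 < α)
    (hI : 1 / 2 * (N - M) ≤ I) (hA : α * x ^ 2 ≤ A)
    (h : I + τ * A ≤ τ * (R * x) + τ * (c * (γ * x))) :
    τ * x ^ 2 ≤ 2 * τ / α ^ 2 * R ^ 2 + 2 * (γ / α) ^ 2 * (τ * c ^ 2) - (N - M) / α := by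
  have e : 2 * τ / α ^ 2 * R ^ 2 + 2 * (γ / α) ^ 2 * (τ * c ^ 2) - (N - M) / α
      = (2 * τ * R ^ 2 + 2 * γ ^ 2 * τ * c ^ 2 - α * (N - M)) / α ^ 2 := by
    field_simp
  rw [e, le_div_iff₀ (by positivity)]
  have h1 : 1 / 2 * (N - M) + τ * (α * x ^ 2) ≤ τ * (R * x) + τ * (c * (γ * x)) := by
    have := mul_le_mul_of_nonneg_left hA hτ.le
    linarith
  have h2 := mul_le_mul_of_nonneg_left h1 hα.le
  have h3 := mul_nonneg hτ.le (sq_nonneg (α * x - 2 * R))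
  have h4 := mul_nonneg hτ.le (sq_nonneg (α * x - 2 * (γ * c)))
  linarith

/-- Spatio-temporal energy estimate for the adjoint error. -/
theorem adjoint_error_energy_estimate
    {H Y D : Type*} [NormedAddCommGroup H] [InnerProductSpace ℝ H]
    [NormedAddCommGroup Y] [InnerProductSpace ℝ Y] [FiniteDimensional ℝ Y]
    [NormedAddCommGroup D] [InnerProductSpace ℝ D]
    (ι : Y →ₗ[ℝ] H) (hι : Function.Injective ι)
    (a : Y →ₗ[ℝ] (Y →ₗ[ℝ] ℝ))
    (τ : ℝ) (hτ : 0 < τ) (K : ℕ) (hK : 1 ≤ K)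
    (αLB : ℝ) (hαLB : 0 < αLB) (hcoer : ∀ v : Y, αLB * ‖v‖ ^ 2 ≤ a v v)
    (C : Y →ₗ[ℝ] D) (γc : ℝ) (hγc : ∀ v : Y, ‖C v‖ ≤ γc * ‖v‖)
    (ey ep : ℕ → Y)
    (rp : ℕ → (Y →ₗ[ℝ] ℝ))
    (hfin : ep (K + 1) = 0)
    (hadj : ∀ k, 1 ≤ k → k ≤ K → ∀ φ : Y,
      ⟪ι φ, ι (ep k - ep (k + 1))⟫ + τ * a φ (ep k)
        = τ * rp k φ - τ * ⟪C (ey k), C φ⟫) :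
    τ * ∑ k ∈ Icc 1 K, ‖ep k‖ ^ 2
      ≤ 2 * τ / αLB ^ 2 * ∑ k ∈ Icc 1 K, (dualNorm (fun v : Y => ‖v‖) Set.univ ⇑(rp k)) ^ 2
        + 2 * (γc / αLB) ^ 2 * (τ * ∑ k ∈ Icc 1 K, ‖C (ey k)‖ ^ 2) := by
  have hstep : ∀ k ∈ Icc 1 K, τ * ‖ep k‖ ^ 2
      ≤ 2 * τ / αLB ^ 2 * (dualNorm (fun v : Y => ‖v‖) Set.univ ⇑(rp k)) ^ 2
        + 2 * (γc / αLB) ^ 2 * (τ * ‖C (ey k)‖ ^ 2)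
        - (‖ι (ep k)‖ ^ 2 - ‖ι (ep (k + 1))‖ ^ 2) / αLB := by
    intro k hk
    rw [mem_Icc] at hk
    have h := hadj k hk.1 hk.2 (ep k)
    refine adjoint_step_real hτ hαLB (I := ⟪ι (ep k), ι (ep k - ep (k + 1))⟫) ?_
      (hcoer (ep k)) ?_
    · rw [map_sub, inner_sub_right, real_inner_self_eq_norm_sq]
      have h1 := real_inner_le_norm (ι (ep k)) (ι (ep (k + 1)))
      nlinarith [sq_nonneg (‖ι (ep k)‖ - ‖ι (ep (k + 1))‖)]
    · rw [h]
      have h1 := mul_le_mul_of_nonneg_left (le_dualNorm_mul (rp k) (ep k)) hτ.le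
      have h2 : -⟪C (ey k), C (ep k)⟫ ≤ ‖C (ey k)‖ * (γc * ‖ep k‖) :=
        (neg_le_abs _).trans ((abs_real_inner_le_norm _ _).trans
          (mul_le_mul_of_nonneg_left (hγc _) (norm_nonneg _)))
      have h3 := mul_le_mul_of_nonneg_left h2 hτ.le
      linarith
  have htel : ∀ n : ℕ, ∑ k ∈ Icc 1 n, (‖ι (ep k)‖ ^ 2 - ‖ι (ep (k + 1))‖ ^ 2) / αLB
      = (‖ι (ep 1)‖ ^ 2 - ‖ι (ep (n + 1))‖ ^ 2) / αLB := by
    intro n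
    induction n with
    | zero => simp
    | succ n ih =>
      rw [Finset.sum_Icc_succ_top (by omega), ih]
      ring
  have hsum := Finset.sum_le_sum hstep
  rw [Finset.sum_sub_distrib, Finset.sum_add_distrib, htel, hfin] at hsum
  simp only [← Finset.mul_sum, map_zero, norm_zero] at hsum
  have hN : 0 ≤ (‖ι (ep 1)‖ ^ 2 - 0 ^ 2) / αLB := by
    apply div_nonneg _ hαLB.le
    nlinarith [sq_nonneg ‖ι (ep 1)‖]
  linarith
end
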